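/- Let A ∈ ℝ^{n×n} be symmetric and let v₁ be a unit eigenvector of A whose eigenvalue λ₁ satisfies |λ₁| = ‖A‖_{2→2}. Then for every unit vector q with Aq ≠ 0, one has (v₁ᵀ(Aq/‖Aq‖₂))² ≥ (v₁ᵀq)²; consequently, along the power iteration the quantity (v₁ᵀq_j)² is nondecreasing in j. -/

import Mathlib

/-!
A vector `v` at which `‖T‖` is attained is a null vector of the positive semidefinite form
`‖T‖² ⟪x, y⟫ - ⟪T x, T y⟫`, so by Cauchy-Schwarz it lies in its kernel: `T* T v = ‖T‖² v`. If
moreover `T v = μ v` with `‖μ‖ = ‖T‖`, this says that `v` is also an eigenvector of `T*`, and hence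
`‖⟪v, T x⟫‖ = ‖T‖ ‖⟪v, x⟫‖`. The component along `v` thus grows by the largest factor by which `T`
can stretch a unit vector `x`, and dividing by `‖T x‖ ≤ ‖T‖` cannot bring it below `‖⟪v, x⟫‖`.
-/

open scoped BigOperators
open Matrix

namespace Stmt7

/-- Euclidean norm of a vector in `ℝⁿ`. -/
noncomputable def enorm {n : ℕ} (v : Fin n → ℝ) : ℝ := Real.sqrt (∑ i, v i ^ 2)

/-- Euclidean inner product of vectors in `ℝⁿ`. -/
def dot {n : ℕ} (v w : Fin n → ℝ) : ℝ := ∑ i, v i * w i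

end Stmt7

open Stmt7

section PowerIteration

variable {V : Type*} [NormedAddCommGroup V] [NormedSpace ℝ V]

/-- `q` is the sequence of power iterates of `T` from the unit vector `q 0`. That `T (q i)` never
vanishes is part of the notion, since `normalize 0 = 0`. -/
structure IsPowerIteration (T : V → V) (q : ℕ → V) : Prop where
  norm_zero : ‖q 0‖ = 1
  map_ne_zero : ∀ i, T (q i) ≠ 0
  succ : ∀ i, q (i + 1) = NormedSpace.normalize (T (q i))

theorem IsPowerIteration.norm_eq_one {T : V → V} {q : ℕ → V} (hq : IsPowerIteration T q) :
    ∀ i, ‖q i‖ = 1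
  | 0 => hq.norm_zero
  | i + 1 => by rw [hq.succ, NormedSpace.norm_normalize (hq.map_ne_zero i)]

end PowerIteration

section LeadingEigenvector

variable {𝕜 E : Type*} [RCLike 𝕜] [NormedAddCommGroup E] [InnerProductSpace 𝕜 E]

open scoped InnerProductSpace

section NormAttaining

variable {F : Type*} [NormedAddCommGroup F] [InnerProductSpace 𝕜 F]

/-- The positive semidefinite form `‖T‖² ⟪x, y⟫ - ⟪T x, T y⟫`, that is, the form of the operator
`‖T‖² - T* T`. It is written without adjoints so that `E` need not be complete, and packaged as a
`PreInnerProductSpace.Core` to make the Cauchy-Schwarz inequality available. -/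
noncomputable abbrev opNormDefectForm (T : E →L[𝕜] F) :
    PreInnerProductSpace.Core 𝕜 E where
  inner x y := (‖T‖ : 𝕜) ^ 2 * ⟪x, y⟫_𝕜 - ⟪T x, T y⟫_𝕜
  conj_inner_symm x y := by simp
  re_inner_nonneg x := by
    have hTx : ‖T x‖ ^ 2 ≤ ‖T‖ ^ 2 * ‖x‖ ^ 2 := by
      rw [← mul_pow]
      gcongr
      exact T.le_opNorm x
    simp only [inner_self_eq_norm_sq_to_K]
    exact_mod_cast sub_nonneg.2 hTx
  add_left x y z := by
    simp only [map_add, inner_add_left]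
    ring
  smul_left x y r := by
    simp only [map_smul, inner_smul_left]
    ring

theorem inner_map_map_eq_of_norm_map_eq (T : E →L[𝕜] F) {v : E} (hv : ‖T v‖ = ‖T‖ * ‖v‖) (x : E) :
    ⟪T v, T x⟫_𝕜 = (‖T‖ : 𝕜) ^ 2 * ⟪v, x⟫_𝕜 := by
  let B := (opNormDefectForm T).inner
  have hvv : B v v = 0 := by
    change (‖T‖ : 𝕜) ^ 2 * ⟪v, v⟫_𝕜 - ⟪T v, T v⟫_𝕜 = 0
    simp only [inner_self_eq_norm_sq_to_K, hv, RCLike.ofReal_mul]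
    ring
  have cauchy_schwarz : ‖B v x‖ * ‖B x v‖ ≤ RCLike.re (B v v) * RCLike.re (B x x) :=
    InnerProductSpace.Core.inner_mul_inner_self_le (c := opNormDefectForm T) v x
  have hsymm : ‖B x v‖ = ‖B v x‖ := by
    rw [← RCLike.norm_conj]
    exact congrArg norm ((opNormDefectForm T).conj_inner_symm v x)
  have hvx : B v x = 0 := by
    rw [hvv, map_zero, zero_mul, hsymm] at cauchy_schwarz
    exact norm_eq_zero.1 (mul_self_eq_zero.1 (cauchy_schwarz.antisymm (by positivity)))
  exact (sub_eq_zero.1 hvx).symm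

end NormAttaining

variable {T : E →L[𝕜] E} {v : E} {μ : 𝕜}

theorem inner_map_right_of_norm_eigenvalue_eq_opNorm (hv : T v = μ • v) (hμ : ‖μ‖ = ‖T‖) (x : E) :
    ⟪v, T x⟫_𝕜 = μ * ⟪v, x⟫_𝕜 := by
  rcases eq_or_ne μ 0 with rfl | hμ0
  · have hT : T = 0 := norm_eq_zero.1 (by rw [← hμ, norm_zero])
    simp [hT]
  · have hnorm : ‖T v‖ = ‖T‖ * ‖v‖ := by rw [hv, norm_smul, hμ]
    refine mul_left_cancel₀ ((map_ne_zero (starRingEnd 𝕜)).2 hμ0) ?_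
    calc starRingEnd 𝕜 μ * ⟪v, T x⟫_𝕜 = ⟪T v, T x⟫_𝕜 := by rw [hv, inner_smul_left]
      _ = (‖μ‖ : 𝕜) ^ 2 * ⟪v, x⟫_𝕜 := by rw [inner_map_map_eq_of_norm_map_eq T hnorm, hμ]
      _ = starRingEnd 𝕜 μ * (μ * ⟪v, x⟫_𝕜) := by rw [← RCLike.conj_mul, mul_assoc]

theorem norm_inner_mul_norm_map_le (hv : T v = μ • v) (hμ : ‖μ‖ = ‖T‖) (x : E) :
    ‖⟪v, x⟫_𝕜‖ * ‖T x‖ ≤ ‖⟪v, T x⟫_𝕜‖ * ‖x‖ :=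
  calc ‖⟪v, x⟫_𝕜‖ * ‖T x‖ ≤ ‖⟪v, x⟫_𝕜‖ * (‖T‖ * ‖x‖) := by gcongr; exact T.le_opNorm x
    _ = ‖μ * ⟪v, x⟫_𝕜‖ * ‖x‖ := by rw [norm_mul, hμ]; ring
    _ = ‖⟪v, T x⟫_𝕜‖ * ‖x‖ := by rw [inner_map_right_of_norm_eigenvalue_eq_opNorm hv hμ]

variable [NormedSpace ℝ E]

theorem norm_inner_normalize_right (x y : E) :
    ‖⟪x, NormedSpace.normalize y⟫_𝕜‖ = ‖⟪x, y⟫_𝕜‖ / ‖y‖ := by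
  have hsmul : ⟪x, NormedSpace.normalize y⟫_𝕜 = ‖y‖⁻¹ • ⟪x, y⟫_𝕜 :=
    map_real_smul (innerSL 𝕜 x) (innerSL 𝕜 x).continuous ‖y‖⁻¹ y
  rw [hsmul, norm_smul, norm_inv, norm_norm, inv_mul_eq_div]

theorem norm_inner_le_norm_inner_normalize_map (hv : T v = μ • v) (hμ : ‖μ‖ = ‖T‖) {x : E}
    (hx : ‖x‖ = 1) (hTx : T x ≠ 0) : ‖⟪v, x⟫_𝕜‖ ≤ ‖⟪v, NormedSpace.normalize (T x)⟫_𝕜‖ := by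
  rw [norm_inner_normalize_right, le_div_iff₀ (norm_pos_iff.2 hTx)]
  simpa only [hx, mul_one] using norm_inner_mul_norm_map_le hv hμ x

theorem power_iteration_monotone_general (hv : T v = μ • v) (hμ : ‖μ‖ = ‖T‖) :
    (∀ x : E, ‖x‖ = 1 → T x ≠ 0 → ‖⟪v, x⟫_𝕜‖ ≤ ‖⟪v, NormedSpace.normalize (T x)⟫_𝕜‖) ∧
      ∀ q : ℕ → E, IsPowerIteration T q → Monotone fun i => ‖⟪v, q i⟫_𝕜‖ := by
  refine ⟨fun x => norm_inner_le_norm_inner_normalize_map hv hμ,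
    fun q hq => monotone_nat_of_le_succ fun i => ?_⟩
  rw [hq.succ]
  exact norm_inner_le_norm_inner_normalize_map hv hμ (hq.norm_eq_one i) (hq.map_ne_zero i)

end LeadingEigenvector

namespace Stmt7

open WithLp

variable {n : ℕ}

theorem enorm_eq_norm_toLp (v : Fin n → ℝ) : Stmt7.enorm v = ‖toLp 2 v‖ := by
  simp [Stmt7.enorm, EuclideanSpace.norm_eq]

theorem dot_sq_eq_norm_inner_toLp_sq (v w : Fin n → ℝ) :
    dot v w ^ 2 = ‖inner ℝ (toLp 2 v) (toLp 2 w)‖ ^ 2 := by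
  simp [dot, EuclideanSpace.inner_toLp_toLp, dotProduct, mul_comm]

theorem toLp_inv_enorm_smul (v : Fin n → ℝ) :
    toLp 2 ((Stmt7.enorm v)⁻¹ • v) = NormedSpace.normalize (toLp 2 v) := by
  rw [toLp_smul, enorm_eq_norm_toLp, NormedSpace.normalize]

theorem isPowerIteration_toLp {A : Matrix (Fin n) (Fin n) ℝ} {q : ℕ → Fin n → ℝ}
    (h0 : Stmt7.enorm (q 0) = 1)
    (hq : ∀ i, A *ᵥ q i ≠ 0 ∧ q (i + 1) = (Stmt7.enorm (A *ᵥ q i))⁻¹ • (A *ᵥ q i)) :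
    IsPowerIteration (toEuclideanCLM (𝕜 := ℝ) A) fun i => toLp 2 (q i) where
  norm_zero := by rw [← enorm_eq_norm_toLp, h0]
  map_ne_zero i := by simpa using (hq i).1
  succ i := by rw [(hq i).2, toLp_inv_enorm_smul, toEuclideanCLM_toLp]

end Stmt7

/-- For a symmetric `A` with leading unit eigenvector `v₁`
(`|λ₁| = ‖A‖₂→₂`), one power iteration step does not decrease `(v₁ᵀq)²`; consequently,
`(v₁ᵀq_j)²` is nondecreasing along the power iteration. -/
theorem power_iteration_monotone
    (n : ℕ) (A : Matrix (Fin n) (Fin n) ℝ) (hA : A.IsSymm)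
    (lam1 : ℝ) (v1 : Fin n → ℝ) (hv1unit : Stmt7.enorm v1 = 1)
    (hv1eig : A *ᵥ v1 = lam1 • v1)
    (hlead : |lam1| = ‖Matrix.toEuclideanCLM (𝕜 := ℝ) A‖) :
    (∀ q : Fin n → ℝ, Stmt7.enorm q = 1 → A *ᵥ q ≠ 0 →
      dot v1 q ^ 2 ≤ dot v1 ((Stmt7.enorm (A *ᵥ q))⁻¹ • (A *ᵥ q)) ^ 2) ∧
    (∀ q : ℕ → Fin n → ℝ, Stmt7.enorm (q 0) = 1 →
      (∀ i : ℕ, A *ᵥ q i ≠ 0 ∧ q (i + 1) = (Stmt7.enorm (A *ᵥ q i))⁻¹ • (A *ᵥ q i)) →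
      ∀ i j : ℕ, i ≤ j → dot v1 (q i) ^ 2 ≤ dot v1 (q j) ^ 2) := by
  obtain ⟨step, mono⟩ := power_iteration_monotone_general (T := toEuclideanCLM (𝕜 := ℝ) A)
    (v := WithLp.toLp 2 v1) (μ := lam1) (by simp [hv1eig]) hlead
  simp only [dot_sq_eq_norm_inner_toLp_sq, toLp_inv_enorm_smul, ← toEuclideanCLM_toLp]
  refine ⟨fun q hq hAq => ?_, fun q h0 hq i j hij => ?_⟩
  · gcongr
    exact step _ (enorm_eq_norm_toLp q ▸ hq) (by simpa using hAq)
  · gcongr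
    exact mono _ (isPowerIteration_toLp h0 hq) hij
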